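/- arXiv:2604.24412 — 2 statements merged into one kernel-verified Lean document; each statement's English description precedes it below -/
import Mathlib

section
/- Let h ≥ 2, let V be a set of size 3h−1, let K be a family of h-element subsets of V, and let H be the hypergraph on V whose edges are the sets V \ B where B ranges over the h-element subsets of V not in K. Let X ⊆ V with |X| = 2h, and suppose X = R ∪ S is a partition with |R| = |S| = h, R ∈ K, and S ∈ K. Then the coloring of X in which R is red and S is blue has no monochromatic trace edge of size at least h: there is no edge e of H with e ∩ X ⊆ R and |e ∩ X| ≥ h, and no edge e of H with e ∩ X ⊆ S and |e ∩ X| ≥ h. -/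
/-- The edges of the hypergraph `H`: complements `V \ B` of the `h`-element
subsets `B` of `V` that do not belong to `K`. -/
def complEdges {α : Type*} [DecidableEq α]
    (V : Finset α) (h : ℕ) (K : Finset (Finset α)) : Finset (Finset α) :=
  (V.powersetCard h \ K).image (fun B => V \ B)

/-!
If the complement of an `h`-set `B` misses an `h`-set `S ⊆ V`, then `S ⊆ B`, so `S = B`. Hence every
edge of `H` meets every member of `K`, and for disjoint `R, S ∈ K` no edge has its trace on `R ∪ S`
inside one of the two halves, whatever the size of the trace.
-/

theorem disjoint_of_inf_sup_le_left {L : Type*} [Lattice L] [OrderBot L] {a b c : L}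
    (hbc : Disjoint b c) (hab : a ⊓ (b ⊔ c) ≤ b) : Disjoint a c :=
  fun _ hxa hxc => hbc ((le_inf hxa (hxc.trans le_sup_right)).trans hab) hxc

section complEdges

variable {α : Type*} [DecidableEq α] {V : Finset α} {h : ℕ} {K : Finset (Finset α)}

theorem mem_complEdges {e : Finset α} :
    e ∈ complEdges V h K ↔ ∃ B ⊆ V, B.card = h ∧ B ∉ K ∧ V \ B = e := by
  simp only [complEdges, Finset.mem_image, Finset.mem_sdiff, Finset.mem_powersetCard, and_assoc]

theorem not_disjoint_of_mem_complEdges {e S : Finset α} (he : e ∈ complEdges V h K)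
    (hSV : S ⊆ V) (hS : h ≤ S.card) (hSK : S ∈ K) : ¬ Disjoint e S := by
  obtain ⟨B, -, hB, hBK, rfl⟩ := mem_complEdges.mp he
  intro hdisj
  have hSB : S ⊆ B := (Finset.subset_sdiff.mpr ⟨hSV, hdisj.symm⟩).trans sdiff_sdiff_le
  obtain rfl : S = B := Finset.eq_of_subset_of_card_le hSB (hB.trans_le hS)
  exact hBK hSK

theorem not_inter_union_subset_left_of_mem_complEdges {e R S : Finset α}
    (he : e ∈ complEdges V h K) (hRS : Disjoint R S) (hSV : S ⊆ V) (hS : h ≤ S.card)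
    (hSK : S ∈ K) : ¬ e ∩ (R ∪ S) ⊆ R :=
  fun htrace => not_disjoint_of_mem_complEdges he hSV hS hSK
    (disjoint_of_inf_sup_le_left hRS htrace)

theorem stmt_7_general (hK : K ⊆ V.powersetCard h) {R S : Finset α} (hdisj : Disjoint R S)
    (hRK : R ∈ K) (hSK : S ∈ K) {e : Finset α} (he : e ∈ complEdges V h K) :
    ¬ e ∩ (R ∪ S) ⊆ R ∧ ¬ e ∩ (R ∪ S) ⊆ S := by
  obtain ⟨hRV, hR⟩ := Finset.mem_powersetCard.mp (hK hRK)
  obtain ⟨hSV, hS⟩ := Finset.mem_powersetCard.mp (hK hSK)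
  refine ⟨not_inter_union_subset_left_of_mem_complEdges he hdisj hSV hS.ge hSK, ?_⟩
  rw [Finset.union_comm]
  exact not_inter_union_subset_left_of_mem_complEdges he hdisj.symm hRV hR.ge hRK

end complEdges

theorem stmt_7 {α : Type*} [DecidableEq α] (h : ℕ) (hh : 2 ≤ h)
    (V : Finset α) (hV : V.card = 3 * h - 1)
    (K : Finset (Finset α)) (hKsub : K ⊆ V.powersetCard h)
    (X : Finset α) (hX : X ⊆ V) (hXcard : X.card = 2 * h)
    (R S : Finset α) (hRS : X = R ∪ S) (hdisj : Disjoint R S)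
    (hR : R.card = h) (hS : S.card = h) (hRK : R ∈ K) (hSK : S ∈ K) :
    (¬ ∃ e ∈ complEdges V h K, e ∩ X ⊆ R ∧ h ≤ (e ∩ X).card) ∧
    (¬ ∃ e ∈ complEdges V h K, e ∩ X ⊆ S ∧ h ≤ (e ∩ X).card) := by
  subst hRS
  exact ⟨fun ⟨_, he, hsub, _⟩ => (stmt_7_general hKsub hdisj hRK hSK he).1 hsub,
    fun ⟨_, he, hsub, _⟩ => (stmt_7_general hKsub hdisj hRK hSK he).2 hsub⟩
end

section
/- Let h ≥ 2 and let q ∈ (0,1) be a real number. If Φ_h(q) = C(3h−1, h−1)·q^{2h} + C(3h−1, 2h)·(1−q²)^{C(2h,h)/2} + C(3h−1, h)·(1−q^h)^{C(2h−1,h−1)} < 1, then on a vertex set V of size 3h−1 there exists a family K of h-element subsets of V satisfying (K1), (K2) and (K3). -/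
/-- `K` is a family of `h`-element subsets of `V` satisfying conditions
(K1), (K2) and (K3). -/
def SatisfiesK {α : Type*} [DecidableEq α]
    (V : Finset α) (h : ℕ) (K : Finset (Finset α)) : Prop :=
  K ⊆ V.powersetCard h ∧
  -- (K1)
  (∀ A ∈ V.powersetCard (h - 1), ∃ v ∈ V \ A, insert v A ∉ K) ∧
  -- (K2)
  (∀ X ∈ V.powersetCard (2 * h), ∃ R ⊆ X, R.card = h ∧ R ∈ K ∧ X \ R ∈ K) ∧
  -- (K3)
  (∀ Y ∈ V.powersetCard h, ∃ U ⊆ V \ Y, U.card = h - 1 ∧ ∀ y ∈ Y, insert y U ∈ K)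

/-!
Put each finite set independently into a random family `𝒦` with probability `q`. Each of the three
conditions only asks which small configurations are contained in `𝒦`, and a configuration of `m`
distinct sets is contained in `𝒦` with probability `q ^ m`. For fixed `X` (respectively `Y`), the
configurations that witness (K2) (respectively (K3)) can be chosen pairwise disjoint, so that the
events that they lie in `𝒦` are independent and all of them fail with probability `(1 - q ^ m) ^ N`,
where `N` is their number. The sum in the hypothesis is then the union bound for the probability
that some condition fails.
-/

open Finset Function MeasureTheory ProbabilityTheory unitInterval

section SetBernoulli

variable {ι κ : Type*} {u : Set ι} {p : I} {B : κ → Finset ι} {J : Finset κ}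

lemma measurableSet_setOf_coe_subset (S : Finset ι) : MeasurableSet {K : Set ι | ↑S ⊆ K} := by
  have : {K : Set ι | ↑S ⊆ K} = ⋂ i ∈ S, {K | i ∈ K} := by ext; simp [Set.subset_def]
  exact this ▸ S.measurableSet_biInter fun i _ ↦ measurableSet_mem i

lemma setBernoulli_setOf_coe_subset {S : Finset ι} (hS : ↑S ⊆ u) :
    setBer(u, p) {K | ↑S ⊆ K} = toNNReal p ^ #S := by
  have : (fun f : ι → Prop ↦ {i | f i}) ⁻¹' {K | ↑S ⊆ K} = (S : Set ι).pi fun _ ↦ {True} := by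
    ext f; simp [Set.subset_def, Set.mem_pi]
  rw [setBernoulli_apply', this, Measure.infinitePi_pi _ fun _ _ ↦ .of_discrete,
    prod_eq_pow_card]
  intro i hi
  simp [show i ∈ u from hS hi]

lemma setBernoulli_real_setOf_coe_subset {S : Finset ι} (hS : ↑S ⊆ u) :
    setBer(u, p).real {K | ↑S ⊆ K} = (p : ℝ) ^ #S := by
  simp [measureReal_def, setBernoulli_setOf_coe_subset hS]

lemma iIndepSet_setOf_coe_subset (hB : ∀ j, ↑(B j) ⊆ u) (hd : Pairwise (Disjoint on B)) :
    iIndepSet (fun j ↦ {K | ↑(B j) ⊆ K}) setBer(u, p) := by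
  classical
  rw [iIndepSet_iff_meas_biInter fun j ↦ measurableSet_setOf_coe_subset (B j)]
  intro T
  have : ⋂ j ∈ T, {K : Set ι | ↑(B j) ⊆ K} = {K | ↑(T.biUnion B) ⊆ K} := by ext; simp
  rw [this, setBernoulli_setOf_coe_subset (by simpa using fun j _ ↦ hB j),
    card_biUnion fun i _ j _ hij ↦ hd hij, ← prod_pow_eq_pow_sum]
  exact prod_congr rfl fun j _ ↦ (setBernoulli_setOf_coe_subset (hB j)).symm

lemma setBernoulli_real_forall_not_subset (hB : ∀ j ∈ J, ↑(B j) ⊆ u)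
    (hd : (J : Set κ).PairwiseDisjoint B) :
    setBer(u, p).real {K | ∀ j ∈ J, ¬ ↑(B j) ⊆ K} = ∏ j ∈ J, (1 - (p : ℝ) ^ #(B j)) := by
  have hindep : iIndepSet (fun j : J ↦ {K | ↑(B j) ⊆ K}) setBer(u, p) :=
    iIndepSet_setOf_coe_subset (fun j ↦ hB j j.2)
      fun i j hij ↦ hd i.2 j.2 (Subtype.coe_injective.ne hij)
  have hcompl (j : J) : setBer(u, p).real {K | ↑(B j) ⊆ K}ᶜ = 1 - (p : ℝ) ^ #(B j) := by
    rw [probReal_compl_eq_one_sub (measurableSet_setOf_coe_subset _),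
      setBernoulli_real_setOf_coe_subset (hB j j.2)]
  have hinter : {K : Set ι | ∀ j ∈ J, ¬ ↑(B j) ⊆ K} = ⋂ j : J, {K | ↑(B j) ⊆ K}ᶜ := by
    ext; simp
  rw [hinter, measureReal_def, iIndep.meas_iInter hindep fun j ↦
    (MeasurableSpace.measurableSet_generateFrom (Set.mem_singleton _)).compl, ENNReal.toReal_prod,
    ← prod_coe_sort J]
  exact prod_congr rfl fun j _ ↦ hcompl j

end SetBernoulli

lemma measureReal_setOf_exists_mem_le_card_mul {Ω β : Type*} [MeasurableSpace Ω] {μ : Measure Ω}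
    {s : Finset β} {E : β → Ω → Prop} {c : ℝ} (hE : ∀ b ∈ s, μ.real {ω | E b ω} ≤ c) :
    μ.real {ω | ∃ b ∈ s, E b ω} ≤ #s * c :=
  calc μ.real {ω | ∃ b ∈ s, E b ω}
    _ = μ.real (⋃ b ∈ s, {ω | E b ω}) := by congr 1; ext; simp
    _ ≤ ∑ b ∈ s, μ.real {ω | E b ω} := measureReal_biUnion_finset_le s _
    _ ≤ #s * c := by simpa only [nsmul_eq_mul] using sum_le_card_nsmul s _ c hE

lemma choose_two_mul_self_div_two {m : ℕ} (hm : 0 < m) :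
    (2 * m).choose m / 2 = (2 * m - 1).choose m := by
  obtain ⟨k, rfl⟩ : ∃ k, m = k + 1 := ⟨m - 1, by lia⟩
  rw [show 2 * (k + 1) = 2 * k + 1 + 1 by lia, Nat.choose_succ_succ', ← Nat.choose_symm_half,
    Nat.add_sub_cancel]
  lia

section Configurations

variable {α : Type*} [DecidableEq α] {U W X Y R S : Finset α} {x : α} {p : I} {m : ℕ}

/-- The sets `U ∪ {y}` with `y ∈ Y`. Condition (K1) asks that `K` contain no
`extensions A (V \ A)`, and (K3) that it contain some `extensions U Y` for each `Y`. -/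
def extensions (U Y : Finset α) : Finset (Finset α) := Y.image (insert · U)

/-- The pair formed by `R` and its complement in `X`, which condition (K2) looks for in `K`. -/
def complementPair (X R : Finset α) : Finset (Finset α) := {R, X \ R}

lemma card_extensions (hUY : Disjoint U Y) : #(extensions U Y) = #Y :=
  card_image_of_injOn <| U.insert_inj_on.mono fun _ hy ↦ disjoint_right.1 hUY hy

lemma disjoint_extensions (hU : Disjoint U Y) (hW : Disjoint W Y) (hUW : U ≠ W) :
    Disjoint (extensions U Y) (extensions W Y) := by
  have sdiff_eq {T : Finset α} (hT : Disjoint T Y) {S} (hS : S ∈ extensions T Y) : S \ Y = T := by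
    obtain ⟨y, hy, rfl⟩ := mem_image.1 hS
    rw [insert_sdiff_of_mem _ hy, hT.sdiff_eq_left]
  exact disjoint_left.2 fun S hSU hSW ↦ hUW <| (sdiff_eq hU hSU).symm.trans (sdiff_eq hW hSW)

lemma card_complementPair (hx : x ∈ X) (hR : x ∉ R) : #(complementPair X R) = 2 :=
  card_pair fun h ↦ hR <| h ▸ mem_sdiff.2 ⟨hx, hR⟩

lemma disjoint_complementPair (hx : x ∈ X) (hR : R ⊆ X.erase x) (hS : S ⊆ X.erase x)
    (hRS : R ≠ S) : Disjoint (complementPair X R) (complementPair X S) := by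
  have eq_of_mem {T Q : Finset α} (hT : T ⊆ X.erase x) (hQ : Q ∈ complementPair X T) :
      T = if x ∈ Q then X \ Q else Q := by
    have hxT : x ∉ T := fun h ↦ notMem_erase x X (hT h)
    rcases mem_insert.1 hQ with rfl | hQ
    · rw [if_neg hxT]
    · rw [mem_singleton.1 hQ, if_pos (mem_sdiff.2 ⟨hx, hxT⟩),
        Finset.sdiff_sdiff_eq_self (hT.trans (erase_subset x X))]
  exact disjoint_left.2 fun Q hQR hQS ↦ hRS <| (eq_of_mem hR hQR).trans (eq_of_mem hS hQS).symm

lemma setBernoulli_real_forall_not_extensions_subset (hYW : Disjoint Y W) :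
    setBer(Set.univ, p).real
        {K : Set (Finset α) | ∀ U ∈ W.powersetCard m, ¬ ↑(extensions U Y) ⊆ K} =
      (1 - (p : ℝ) ^ #Y) ^ (#W).choose m := by
  have hdisj {U} (hU : U ∈ W.powersetCard m) : Disjoint U Y :=
    (hYW.mono_right (mem_powersetCard.1 hU).1).symm
  rw [setBernoulli_real_forall_not_subset (fun _ _ ↦ Set.subset_univ _)
    fun U hU T hT hUT ↦ disjoint_extensions (hdisj hU) (hdisj hT) hUT, ← card_powersetCard]
  exact prod_eq_pow_card fun U hU ↦ by rw [card_extensions (hdisj hU)]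

lemma setBernoulli_real_forall_not_complementPair_subset_le (hm : 0 < m) (hX : #X = 2 * m) :
    setBer(Set.univ, p).real
        {K : Set (Finset α) | ∀ R ∈ X.powersetCard m, ¬ ↑(complementPair X R) ⊆ K} ≤
      (1 - (p : ℝ) ^ 2) ^ ((2 * m).choose m / 2) := by
  -- The sets `R` avoiding a fixed `x ∈ X` represent each complementary pair exactly once, and
  -- the pairs they represent are disjoint.
  obtain ⟨x, hx⟩ : X.Nonempty := card_pos.1 (by lia)
  have hsub {R} (hR : R ∈ (X.erase x).powersetCard m) : R ⊆ X.erase x := (mem_powersetCard.1 hR).1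
  calc setBer(Set.univ, p).real
        {K : Set (Finset α) | ∀ R ∈ X.powersetCard m, ¬ ↑(complementPair X R) ⊆ K}
    _ ≤ setBer(Set.univ, p).real
        {K : Set (Finset α) | ∀ R ∈ (X.erase x).powersetCard m, ¬ ↑(complementPair X R) ⊆ K} :=
      measureReal_mono fun K hK R hR ↦ hK R (powersetCard_mono (erase_subset x X) hR)
    _ = ∏ R ∈ (X.erase x).powersetCard m, (1 - (p : ℝ) ^ #(complementPair X R)) :=
      setBernoulli_real_forall_not_subset (fun _ _ ↦ Set.subset_univ _)
        fun R hR S hS hRS ↦ disjoint_complementPair hx (hsub hR) (hsub hS) hRS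
    _ = (1 - (p : ℝ) ^ 2) ^ #((X.erase x).powersetCard m) :=
      prod_eq_pow_card fun R hR ↦ by
        rw [card_complementPair hx fun h ↦ notMem_erase x X (hsub hR h)]
    _ = (1 - (p : ℝ) ^ 2) ^ ((2 * m).choose m / 2) := by
      rw [card_powersetCard, card_erase_of_mem hx, hX, choose_two_mul_self_div_two hm]

lemma setBernoulli_real_exists_extensions_subset_le (V : Finset α) (k : ℕ) :
    setBer(Set.univ, p).real
        {K : Set (Finset α) | ∃ A ∈ V.powersetCard k, ↑(extensions A (V \ A)) ⊆ K} ≤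
      (#V).choose k * (p : ℝ) ^ (#V - k) := by
  rw [← card_powersetCard]
  refine measureReal_setOf_exists_mem_le_card_mul fun A hA ↦ ?_
  obtain ⟨hAV, rfl⟩ := mem_powersetCard.1 hA
  rw [setBernoulli_real_setOf_coe_subset (Set.subset_univ _), card_extensions disjoint_sdiff,
    card_sdiff_of_subset hAV]

lemma setBernoulli_real_exists_forall_not_complementPair_subset_le (V : Finset α) (hm : 0 < m) :
    setBer(Set.univ, p).real {K : Set (Finset α) | ∃ X ∈ V.powersetCard (2 * m),
        ∀ R ∈ X.powersetCard m, ¬ ↑(complementPair X R) ⊆ K} ≤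
      (#V).choose (2 * m) * (1 - (p : ℝ) ^ 2) ^ ((2 * m).choose m / 2) := by
  rw [← card_powersetCard (2 * m)]
  exact measureReal_setOf_exists_mem_le_card_mul fun X hX ↦
    setBernoulli_real_forall_not_complementPair_subset_le hm (mem_powersetCard.1 hX).2

lemma setBernoulli_real_exists_forall_not_extensions_subset_le (V : Finset α) (k m : ℕ) :
    setBer(Set.univ, p).real {K : Set (Finset α) | ∃ Y ∈ V.powersetCard k,
        ∀ U ∈ (V \ Y).powersetCard m, ¬ ↑(extensions U Y) ⊆ K} ≤
      (#V).choose k * (1 - (p : ℝ) ^ k) ^ (#V - k).choose m := by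
  rw [← card_powersetCard k V]
  refine measureReal_setOf_exists_mem_le_card_mul fun Y hY ↦ ?_
  obtain ⟨hYV, rfl⟩ := mem_powersetCard.1 hY
  rw [setBernoulli_real_forall_not_extensions_subset disjoint_sdiff, card_sdiff_of_subset hYV]

lemma exists_satisfiesK_of_set {V : Finset α} {h : ℕ} (hh : 0 < h) {𝒦 : Set (Finset α)}
    (h₁ : ∀ A ∈ V.powersetCard (h - 1), ¬ ↑(extensions A (V \ A)) ⊆ 𝒦)
    (h₂ : ∀ X ∈ V.powersetCard (2 * h), ∃ R ∈ X.powersetCard h, ↑(complementPair X R) ⊆ 𝒦)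
    (h₃ : ∀ Y ∈ V.powersetCard h, ∃ U ∈ (V \ Y).powersetCard (h - 1), ↑(extensions U Y) ⊆ 𝒦) :
    ∃ K, SatisfiesK V h K := by
  classical
  refine ⟨{S ∈ V.powersetCard h | S ∈ 𝒦}, filter_subset _ _, fun A hA ↦ ?_, fun X hX ↦ ?_,
    fun Y hY ↦ ?_⟩
  · obtain ⟨S, hS, hS𝒦⟩ := Set.not_subset.1 (h₁ A hA)
    obtain ⟨v, hv, rfl⟩ := mem_image.1 hS
    exact ⟨v, hv, fun hK ↦ hS𝒦 (mem_filter.1 hK).2⟩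
  · obtain ⟨hXV, hXcard⟩ := mem_powersetCard.1 hX
    obtain ⟨R, hR, hR𝒦⟩ := h₂ X hX
    obtain ⟨hRX, hRcard⟩ := mem_powersetCard.1 hR
    have hcompl : #(X \ R) = h := by rw [card_sdiff_of_subset hRX]; lia
    refine ⟨R, hRX, hRcard, ?_, ?_⟩ <;> simp only [mem_filter, mem_powersetCard]
    · exact ⟨⟨hRX.trans hXV, hRcard⟩, hR𝒦 (by simp [complementPair])⟩
    · exact ⟨⟨sdiff_subset.trans hXV, hcompl⟩, hR𝒦 (by simp [complementPair])⟩
  · obtain ⟨hYV, -⟩ := mem_powersetCard.1 hY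
    obtain ⟨U, hU, hU𝒦⟩ := h₃ Y hY
    obtain ⟨hUV, hUcard⟩ := mem_powersetCard.1 hU
    refine ⟨U, hUV, hUcard, fun y hy ↦ mem_filter.2 ⟨mem_powersetCard.2 ⟨?_, ?_⟩, ?_⟩⟩
    · exact insert_subset (hYV hy) (hUV.trans sdiff_subset)
    · rw [card_insert_of_notMem fun hyU ↦ (mem_sdiff.1 (hUV hyU)).2 hy]
      lia
    · exact hU𝒦 (mem_coe.2 (mem_image_of_mem _ hy))

end Configurations

theorem stmt_11_general {α : Type*} [DecidableEq α] (V : Finset α) {h : ℕ} (hh : 0 < h) {q : ℝ}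
    (hq0 : 0 ≤ q) (hq1 : q ≤ 1)
    (hPhi : ((#V).choose (h - 1) : ℝ) * q ^ (#V - (h - 1)) +
        ((#V).choose (2 * h) : ℝ) * (1 - q ^ 2) ^ ((2 * h).choose h / 2) +
        ((#V).choose h : ℝ) * (1 - q ^ h) ^ ((#V - h).choose (h - 1)) < 1) :
    ∃ K, SatisfiesK V h K := by
  let P : Measure (Set (Finset α)) := setBer(Set.univ, ⟨q, hq0, hq1⟩)
  let bad₁ : Set (Set (Finset α)) :=
    {𝒦 | ∃ A ∈ V.powersetCard (h - 1), ↑(extensions A (V \ A)) ⊆ 𝒦}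
  let bad₂ : Set (Set (Finset α)) :=
    {𝒦 | ∃ X ∈ V.powersetCard (2 * h), ∀ R ∈ X.powersetCard h, ¬ ↑(complementPair X R) ⊆ 𝒦}
  let bad₃ : Set (Set (Finset α)) :=
    {𝒦 | ∃ Y ∈ V.powersetCard h, ∀ U ∈ (V \ Y).powersetCard (h - 1), ¬ ↑(extensions U Y) ⊆ 𝒦}
  have hlt : P.real (bad₁ ∪ bad₂ ∪ bad₃) < 1 :=
    calc P.real (bad₁ ∪ bad₂ ∪ bad₃)
      _ ≤ P.real bad₁ + P.real bad₂ + P.real bad₃ :=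
        (measureReal_union_le _ _).trans (add_le_add_left (measureReal_union_le _ _) _)
      _ ≤ _ := add_le_add_three (setBernoulli_real_exists_extensions_subset_le V (h - 1))
        (setBernoulli_real_exists_forall_not_complementPair_subset_le V hh)
        (setBernoulli_real_exists_forall_not_extensions_subset_le V h (h - 1))
      _ < 1 := hPhi
  obtain ⟨𝒦, h𝒦⟩ : ∃ 𝒦, 𝒦 ∉ bad₁ ∪ bad₂ ∪ bad₃ :=
    (Set.ne_univ_iff_exists_notMem _).1 fun huniv ↦ hlt.ne (huniv ▸ probReal_univ)
  simp only [bad₁, bad₂, bad₃, Set.mem_union, Set.mem_ofPred_eq, not_or] at h𝒦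
  push Not at h𝒦
  exact exists_satisfiesK_of_set hh h𝒦.1.1 h𝒦.1.2 h𝒦.2

theorem stmt_11 (h : ℕ) (hh : 2 ≤ h) (q : ℝ) (hq0 : 0 < q) (hq1 : q < 1)
    (hPhi : ((3 * h - 1).choose (h - 1) : ℝ) * q ^ (2 * h) +
        ((3 * h - 1).choose (2 * h) : ℝ) * (1 - q ^ 2) ^ ((2 * h).choose h / 2) +
        ((3 * h - 1).choose h : ℝ) * (1 - q ^ h) ^ ((2 * h - 1).choose (h - 1)) < 1) :
    ∃ K : Finset (Finset (Fin (3 * h - 1))),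
      SatisfiesK (Finset.univ : Finset (Fin (3 * h - 1))) h K := by
  refine stmt_11_general univ (by lia) hq0.le hq1.le ?_
  rwa [card_fin, show 3 * h - 1 - (h - 1) = 2 * h by lia, show 3 * h - 1 - h = 2 * h - 1 by lia]
end
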